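/- Over the Klein group Q = Z_2 ⊕ Z_2 with automorphisms φ_3 = [[1,1],[0,1]], φ_6 = [[0,1],[1,1]], φ_2 = [[1,0],[1,1]], φ_5 = [[1,1],[1,0]], the three ternary operations K_1(x,y,z) = φ_3 x + φ_6 y + a_1 + z, K_2(x,y,z) = φ_2 x + φ_5 y + a_2 + z, K_3(x,y,z) = φ_3 x + φ_5 y + a_3 + z (for any fixed a_1,a_2,a_3 ∈ Q) form an orthogonal system: for any b_1,b_2,b_3 ∈ Q the system K_i(x,y,z) = b_i has the unique solution x = φ_4(b_2+a_2+b_3+a_3), y = b_1+a_1+b_3+a_3, z = b_3+a_3+φ_5(b_1+a_1+b_2+a_2), where φ_4 = [[0,1],[1,0]]. -/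

import Mathlib

/-!
The three equations share coefficients: subtracting the third from the second leaves only `x`, with
coefficient `φ₂ + φ₃ = φ₄`, and subtracting it from the first leaves only `y`, with coefficient
`φ₅ + φ₆ = 1`; signs do not matter in exponent two. Since `φ₄` is an involution, this determines `x`
and `y`, and the third equation then gives `z`, where `φ₃ φ₄ = φ₅` collapses the two image terms.
-/

theorem add_system_iff_sub_eq_sub {M : Type*} [AddCommGroup M] (u u' v v' z c₁ c₂ c₃ : M) :
    (u + v' + z = c₁ ∧ u' + v + z = c₂ ∧ u + v + z = c₃) ↔
      (u' - u = c₂ - c₃ ∧ v' - v = c₁ - c₃ ∧ z = c₃ - (u + v)) := by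
  constructor
  · rintro ⟨rfl, rfl, rfl⟩
    refine ⟨?_, ?_, ?_⟩ <;> abel
  · rintro ⟨hu, hv, rfl⟩
    rw [sub_eq_iff_eq_add] at hu hv
    subst hu hv
    refine ⟨?_, ?_, ?_⟩ <;> abel

section ExponentTwo

variable {M : Type*} [AddCommGroup M] [Module (ZMod 2) M]

theorem add_add_eq_iff_of_zmod_two (u a z b : M) : u + a + z = b ↔ u + z = b + a := by
  rw [add_right_comm, ← eq_sub_iff_add_eq, ZModModule.sub_eq_add]

theorem ternary_system_unique_solution_general {φ₂ φ₃ φ₄ φ₅ φ₆ : M → M}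
    (h₂₃ : ∀ v, φ₂ v + φ₃ v = φ₄ v) (h₅₆ : ∀ v, φ₅ v + φ₆ v = v)
    (hφ₄ : Function.Involutive φ₄) (h₃₄ : ∀ v, φ₃ (φ₄ v) = φ₅ v)
    (hφ₅ : ∀ v w, φ₅ (v + w) = φ₅ v + φ₅ w) (a₁ a₂ a₃ b₁ b₂ b₃ x y z : M) :
    (φ₃ x + φ₆ y + a₁ + z = b₁ ∧ φ₂ x + φ₅ y + a₂ + z = b₂ ∧
        φ₃ x + φ₅ y + a₃ + z = b₃) ↔
      (x = φ₄ (b₂ + a₂ + b₃ + a₃) ∧ y = b₁ + a₁ + b₃ + a₃ ∧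
        z = b₃ + a₃ + φ₅ (b₁ + a₁ + b₂ + a₂)) := by
  simp only [add_add_eq_iff_of_zmod_two _ a₁, add_add_eq_iff_of_zmod_two _ a₂,
    add_add_eq_iff_of_zmod_two _ a₃]
  rw [add_assoc (b₂ + a₂), add_assoc (b₁ + a₁), add_assoc (b₁ + a₁)]
  generalize b₁ + a₁ = c₁, b₂ + a₂ = c₂, b₃ + a₃ = c₃
  have image_terms : c₃ + (φ₃ (φ₄ (c₂ + c₃)) + φ₅ (c₁ + c₃)) = c₃ + φ₅ (c₁ + c₂) := by
    rw [h₃₄, ← hφ₅, add_add_add_comm, ZModModule.add_self, add_zero, add_comm c₂]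
  calc
    (φ₃ x + φ₆ y + z = c₁ ∧ φ₂ x + φ₅ y + z = c₂ ∧ φ₃ x + φ₅ y + z = c₃) ↔
        φ₂ x - φ₃ x = c₂ - c₃ ∧ φ₆ y - φ₅ y = c₁ - c₃ ∧ z = c₃ - (φ₃ x + φ₅ y) :=
      add_system_iff_sub_eq_sub ..
    _ ↔ φ₄ x = c₂ + c₃ ∧ y = c₁ + c₃ ∧ z = c₃ + (φ₃ x + φ₅ y) := by
      simp only [ZModModule.sub_eq_add, h₂₃, add_comm (φ₆ y), h₅₆]
    _ ↔ x = φ₄ (c₂ + c₃) ∧ y = c₁ + c₃ ∧ z = c₃ + (φ₃ x + φ₅ y) := by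
      rw [hφ₄.eq_iff, eq_comm]
    _ ↔ x = φ₄ (c₂ + c₃) ∧ y = c₁ + c₃ ∧ z = c₃ + φ₅ (c₁ + c₂) := by
      refine and_congr_right fun hx ↦ and_congr_right fun hy ↦ ?_
      rw [hx, hy, image_terms]

end ExponentTwo

/-- Orthogonality of the three ternary operations K₁, K₂, K₃ over the Klein group
F₂²: the system K_i(x,y,z) = b_i has the explicitly given unique solution. The
matrices φ₂,φ₃,φ₄,φ₅,φ₆ act on pairs in the indicated way. -/
theorem ternary_system_unique_solution
    (a₁ a₂ a₃ b₁ b₂ b₃ : ZMod 2 × ZMod 2) :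
    let φ₂ : ZMod 2 × ZMod 2 → ZMod 2 × ZMod 2 := fun v => (v.1, v.1 + v.2)
    let φ₃ : ZMod 2 × ZMod 2 → ZMod 2 × ZMod 2 := fun v => (v.1 + v.2, v.2)
    let φ₄ : ZMod 2 × ZMod 2 → ZMod 2 × ZMod 2 := fun v => (v.2, v.1)
    let φ₅ : ZMod 2 × ZMod 2 → ZMod 2 × ZMod 2 := fun v => (v.1 + v.2, v.1)
    let φ₆ : ZMod 2 × ZMod 2 → ZMod 2 × ZMod 2 := fun v => (v.2, v.1 + v.2)
    ∀ x y z : ZMod 2 × ZMod 2,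
      (φ₃ x + φ₆ y + a₁ + z = b₁ ∧ φ₂ x + φ₅ y + a₂ + z = b₂ ∧
        φ₃ x + φ₅ y + a₃ + z = b₃) ↔
      (x = φ₄ (b₂ + a₂ + b₃ + a₃) ∧ y = b₁ + a₁ + b₃ + a₃ ∧
        z = b₃ + a₃ + φ₅ (b₁ + a₁ + b₂ + a₂)) := by
  intro φ₂ φ₃ φ₄ φ₅ φ₆
  have h₂₃ : ∀ v, φ₂ v + φ₃ v = φ₄ v := by decide
  have h₅₆ : ∀ v, φ₅ v + φ₆ v = v := by decide
  have hφ₄ : Function.Involutive φ₄ := Prod.swap_swap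
  have h₃₄ : ∀ v, φ₃ (φ₄ v) = φ₅ v := by decide
  have hφ₅ : ∀ v w, φ₅ (v + w) = φ₅ v + φ₅ w := by decide
  exact ternary_system_unique_solution_general h₂₃ h₅₆ hφ₄ h₃₄ hφ₅ a₁ a₂ a₃ b₁ b₂ b₃
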